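/- Let d > 2 be an integer. (i) There exists a constant C > 0, depending only on d, such that for all x, y ∈ ℤ^d with (x,y) ≠ (0,0) and all α ∈ (0,1): Σ_{k≥1} k·(1−α)^k·P(X_k = x)·P(X_k = y) ≤ Σ_{k≥1} k·P(X_k = x)·P(X_k = y) ≤ C/(‖x‖^{2d−4} + ‖y‖^{2d−4}). (ii) For every c₀ > 0 there exist constants c₂ > 0, C′ > 0 and α₀ ∈ (0,1), depending only on d and c₀, such that for all α ∈ (0, α₀) and all x, y ∈ ℤ^d with ‖x‖ + ‖y‖ ≥ c₀/√α: Σ_{k≥1} k·(1−α)^k·P(X_k = x)·P(X_k = y) ≤ C′·e^{−c₂·(‖x‖+‖y‖)·√α}/(‖x‖^{2d−4} + ‖y‖^{2d−4}). -/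

import Mathlib

/-! The transition probabilities satisfy the local Gaussian bound
`P(X_k = x)² ≤ (4d / (k + 1)) ^ d * exp (-‖x‖² / (4 (k + 1)))`, which is obtained without Fourier
analysis. In dimension one it follows from elementary bounds on binomial coefficients. In general,
the exponential generating function of the numbers of walks on `ℤ^d` ending at `x` is the product of
the one-dimensional ones over the coordinates of `x`, because both satisfy the same differential
equation. Its coefficients are thus sums over the numbers `l i` of steps taken in each direction,
and Cauchy–Schwarz bounds their squares by the multinomial sum `∑ ∏ 2 ^ l i / (l i)!` times a sum
controlled by the one-dimensional bounds. The factors `1 / (l i + 1)` of the latter turn `(l i)!`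
into `(l i + 1)!`, so that the second sum is part of the multinomial expansion of
`(2d) ^ (k + d) / (k + d)!`, and `k! / (k + d)! ≤ (k + 1) ^ (-d)`.

With `t = k + 1` and `R = ‖x‖² + ‖y‖²`, the summand `k (1 - α) ^ k P(X_k = x) P(X_k = y)` is then at
most a constant times `t ^ (1 - d) * exp (-α t - R / (8 t))`. By the inequality of arithmetic and
geometric means, `α t` and half of `R / (8 t)` yield the factor `exp (-(‖x‖ + ‖y‖) √α / 4)`. The
other half makes the rest `O((R + t) ^ (1 - d))`, whose sum over `t` is `O(R ^ (2 - d))` by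
telescoping. Part (i) is the case `α = 0`. -/

open Filter

noncomputable section

/-- `srwP d k x` is the probability that the simple random walk on `ℤ^d`
started at `0` is at `x` at time `k`. -/
def srwP (d : ℕ) : ℕ → (Fin d → ℤ) → ENNReal
  | 0, x => if x = 0 then 1 else 0
  | k + 1, x =>
      (2 * d : ENNReal)⁻¹ *
        ∑ i : Fin d, (srwP d k (x - Pi.single i 1) + srwP d k (x + Pi.single i 1))

/-- The Euclidean norm on `ℤ^d`. -/
def nrmZ (d : ℕ) (x : Fin d → ℤ) : ℝ := Real.sqrt (∑ i, ((x i : ℝ)) ^ 2)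

/-- The Green's function of the simple random walk on `ℤ^d`. -/
def green (d : ℕ) (x : Fin d → ℤ) : ENNReal := ∑' k : ℕ, srwP d k x

/-- Convolution of two `[0,∞]`-valued functions on `ℤ^d`. -/
def convE (d : ℕ) (f h : (Fin d → ℤ) → ENNReal) (z : Fin d → ℤ) : ENNReal :=
  ∑' x, f x * h (z - x)

section BinomialBounds

lemma centralBinom_sq_mul_le (m : ℕ) : (m.centralBinom : ℝ) ^ 2 * (2 * m + 1) ≤ 16 ^ m := by
  induction m with
  | zero => simp
  | succ m ih =>
    have recurrence : ((m : ℝ) + 1) * (m + 1).centralBinom = 2 * (2 * m + 1) * m.centralBinom := by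
      exact_mod_cast Nat.succ_mul_centralBinom_succ m
    refine le_of_mul_le_mul_left (a := ((m : ℝ) + 1) ^ 2) ?_ (by positivity)
    push_cast
    calc ((m : ℝ) + 1) ^ 2 * (((m + 1).centralBinom : ℝ) ^ 2 * (2 * (m + 1) + 1))
        = (((m : ℝ) + 1) * (m + 1).centralBinom) ^ 2 * (2 * m + 3) := by ring
      _ = 4 * ((2 * m + 1) * (2 * m + 3)) * ((m.centralBinom : ℝ) ^ 2 * (2 * m + 1)) := by
        rw [recurrence]; ring
      _ ≤ 4 * (4 * ((m : ℝ) + 1) ^ 2) * 16 ^ m := by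
        gcongr ?_ * ?_
        linarith
      _ = ((m : ℝ) + 1) ^ 2 * 16 ^ (m + 1) := by ring

lemma choose_add_succ_le_mul_exp (m j : ℕ) :
    ((2 * m).choose (m + (j + 1)) : ℝ) ≤
      (2 * m).choose (m + j) * Real.exp (-((2 * j + 1) / (2 * m + 1))) := by
  rcases le_or_gt m j with hj | hj
  · rw [Nat.choose_eq_zero_of_lt (by omega), Nat.cast_zero]
    positivity
  have hjm : (j : ℝ) + 1 ≤ m := by exact_mod_cast hj
  have ratio : ((2 * m).choose (m + (j + 1)) : ℝ) * (m + j + 1) =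
      (2 * m).choose (m + j) * (m - j) := by
    have h := Nat.choose_succ_right_eq (2 * m) (m + j)
    rw [show 2 * m - (m + j) = m - j by omega] at h
    rw [← Nat.cast_sub hj.le]
    exact_mod_cast h
  calc ((2 * m).choose (m + (j + 1)) : ℝ)
      = (2 * m).choose (m + j) * (1 - (2 * j + 1) / (m + j + 1)) := by
        field_simp
        linear_combination ratio
    _ ≤ (2 * m).choose (m + j) * (1 - (2 * j + 1) / (2 * m + 1)) := by
        gcongr
        linarith
    _ ≤ (2 * m).choose (m + j) * Real.exp (-((2 * j + 1) / (2 * m + 1))) := by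
        gcongr
        exact Real.one_sub_le_exp_neg _

lemma choose_add_le_centralBinom_mul_exp (m j : ℕ) :
    ((2 * m).choose (m + j) : ℝ) ≤ m.centralBinom * Real.exp (-((j : ℝ) ^ 2 / (2 * m + 1))) := by
  induction j with
  | zero => simp [Nat.centralBinom]
  | succ j ih =>
    calc ((2 * m).choose (m + (j + 1)) : ℝ)
        ≤ (2 * m).choose (m + j) * Real.exp (-((2 * j + 1) / (2 * m + 1))) :=
          choose_add_succ_le_mul_exp m j
      _ ≤ m.centralBinom * Real.exp (-((j : ℝ) ^ 2 / (2 * m + 1))) *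
            Real.exp (-((2 * j + 1) / (2 * m + 1))) := by gcongr
      _ = m.centralBinom * Real.exp (-(((j + 1 : ℕ) : ℝ) ^ 2 / (2 * m + 1))) := by
        rw [mul_assoc, ← Real.exp_add]
        push_cast
        ring_nf

lemma choose_add_sq_le (m j : ℕ) :
    ((2 * m).choose (m + j) : ℝ) ^ 2 ≤
      16 ^ m / (2 * m + 1) * Real.exp (-(2 * (j : ℝ) ^ 2 / (2 * m + 1))) := by
  calc ((2 * m).choose (m + j) : ℝ) ^ 2
      ≤ (m.centralBinom * Real.exp (-((j : ℝ) ^ 2 / (2 * m + 1)))) ^ 2 := by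
        gcongr
        exact choose_add_le_centralBinom_mul_exp m j
    _ = (m.centralBinom : ℝ) ^ 2 * Real.exp (-(2 * (j : ℝ) ^ 2 / (2 * m + 1))) := by
        rw [mul_pow, ← Real.exp_nat_mul]
        push_cast
        ring_nf
    _ ≤ 16 ^ m / (2 * m + 1) * Real.exp (-(2 * (j : ℝ) ^ 2 / (2 * m + 1))) := by
        gcongr
        rw [le_div_iff₀ (by positivity)]
        exact centralBinom_sq_mul_le m

end BinomialBounds

section LineWalk

/-- The number of nearest-neighbour walks of length `n` on `ℤ` from `0` to `z`. -/
def lineWalkCount : ℕ → ℤ → ℕ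
  | 0, z => if z = 0 then 1 else 0
  | n + 1, z => lineWalkCount n (z - 1) + lineWalkCount n (z + 1)

lemma lineWalkCount_neg (n : ℕ) (z : ℤ) : lineWalkCount n (-z) = lineWalkCount n z := by
  induction n generalizing z with
  | zero => simp [lineWalkCount]
  | succ n ih =>
    rw [lineWalkCount, lineWalkCount, ← ih (z - 1), ← ih (z + 1), add_comm]
    congr 2 <;> ring

lemma lineWalkCount_eq_zero_of_lt_neg {n : ℕ} {z : ℤ} (hz : z < -n) : lineWalkCount n z = 0 := by
  induction n generalizing z with
  | zero => exact if_neg (by omega)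
  | succ n ih => rw [lineWalkCount, ih (by omega), ih (by omega)]

lemma lineWalkCount_eq_zero_of_odd {n : ℕ} {z : ℤ} (hz : Odd (n + z)) : lineWalkCount n z = 0 := by
  rw [Int.odd_iff] at hz
  induction n generalizing z with
  | zero => exact if_neg (by omega)
  | succ n ih => rw [lineWalkCount, ih (by omega), ih (by omega)]

lemma lineWalkCount_le_succ_add_one (n : ℕ) (z : ℤ) :
    lineWalkCount n z ≤ lineWalkCount (n + 1) (z + 1) := by
  simp [lineWalkCount]

lemma lineWalkCount_two_mul_sub (n j : ℕ) : lineWalkCount n (2 * j - n) = n.choose j := by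
  induction n generalizing j with
  | zero => cases j <;> simp [lineWalkCount]; omega
  | succ n ih =>
    rw [lineWalkCount]
    cases j with
    | zero =>
      rw [lineWalkCount_eq_zero_of_lt_neg (by omega), zero_add, Nat.choose_zero_right]
      convert ih 0 using 2
      · push_cast
        ring
      · exact n.choose_zero_right.symm
    | succ j =>
      rw [Nat.choose_succ_succ, ← ih j, ← ih (j + 1)]
      congr 2 <;> push_cast <;> ring

lemma lineWalkCount_two_mul_sq_le (m : ℕ) (z : ℤ) :
    (lineWalkCount (2 * m) z : ℝ) ^ 2 ≤
      16 ^ m / (2 * m + 1) * Real.exp (-((z : ℝ) ^ 2 / (2 * (2 * m + 1)))) := by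
  wlog hz : 0 ≤ z generalizing z
  · simpa [lineWalkCount_neg] using this (-z) (by omega)
  lift z to ℕ using hz
  rcases z.even_or_odd' with ⟨j, rfl | rfl⟩
  · have count_eq : lineWalkCount (2 * m) (2 * j : ℕ) = (2 * m).choose (m + j) := by
      rw [← lineWalkCount_two_mul_sub]
      congr 1
      push_cast
      ring
    rw [count_eq]
    convert choose_add_sq_le m j using 4
    push_cast
    field_simp
  · rw [lineWalkCount_eq_zero_of_odd ⟨m + j, by push_cast; ring⟩, Nat.cast_zero,
      zero_pow two_ne_zero]
    positivity

/-- Odd times are reduced to even ones by taking one further step away from the origin. -/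
lemma lineWalkCount_sq_le (n : ℕ) (z : ℤ) :
    (lineWalkCount n z : ℝ) ^ 2 ≤
      4 * 4 ^ n / (n + 1) * Real.exp (-((z : ℝ) ^ 2 / (4 * (n + 1)))) := by
  wlog hz : 0 ≤ z generalizing z
  · simpa [lineWalkCount_neg] using this (-z) (by omega)
  rcases n.even_or_odd' with ⟨m, rfl | rfl⟩
  · refine (lineWalkCount_two_mul_sq_le m z).trans ?_
    rw [pow_mul]
    norm_num only
    push_cast
    gcongr
    · linarith [pow_pos (show (0 : ℝ) < 16 by norm_num) m]
    · norm_num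
  · calc (lineWalkCount (2 * m + 1) z : ℝ) ^ 2
        ≤ (lineWalkCount (2 * (m + 1)) (z + 1) : ℝ) ^ 2 := by
          gcongr
          exact lineWalkCount_le_succ_add_one (2 * m + 1) z
      _ ≤ 16 ^ (m + 1) / (2 * (m + 1 : ℕ) + 1) *
            Real.exp (-(((z + 1 : ℤ) : ℝ) ^ 2 / (2 * (2 * (m + 1 : ℕ) + 1)))) :=
          lineWalkCount_two_mul_sq_le (m + 1) (z + 1)
      _ ≤ 4 * 4 ^ (2 * m + 1) / ((2 * m + 1 : ℕ) + 1) *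
            Real.exp (-((z : ℝ) ^ 2 / (4 * ((2 * m + 1 : ℕ) + 1)))) := by
        rw [show (4 : ℝ) * 4 ^ (2 * m + 1) = 16 ^ (m + 1) by
          rw [← pow_succ', show 2 * m + 1 + 1 = 2 * (m + 1) by ring, pow_mul]; norm_num]
        push_cast
        gcongr ?_ / ?_ * Real.exp (-(?_ ^ 2 / ?_)) <;> linarith

end LineWalk

section PowerSeriesProducts

open PowerSeries

lemma derivation_finset_prod {ι R A M : Type*} [DecidableEq ι] [CommSemiring R] [CommSemiring A]
    [Algebra R A] [AddCommMonoid M] [Module A M] [Module R M] (D : Derivation R A M)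
    (s : Finset ι) (f : ι → A) :
    D (∏ i ∈ s, f i) = ∑ i ∈ s, (∏ j ∈ s.erase i, f j) • D (f i) := by
  induction s using Finset.induction_on with
  | empty => simp
  | insert a s ha ih =>
    rw [Finset.prod_insert ha, Derivation.leibniz, ih, Finset.sum_insert ha,
      Finset.erase_insert ha, add_comm, Finset.smul_sum]
    congr 1
    refine Finset.sum_congr rfl fun i hi => ?_
    rw [Finset.erase_insert_of_ne (ne_of_mem_of_not_mem hi ha).symm,
      Finset.prod_insert (by simp [ha]), mul_smul]

lemma apply_le_of_mem_finsuppAntidiag {ι : Type*} [DecidableEq ι] {s : Finset ι} {k : ℕ}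
    {l : ι →₀ ℕ} (hl : l ∈ s.finsuppAntidiag k) {i : ι} (hi : i ∈ s) : l i ≤ k := by
  rw [← (Finset.mem_finsuppAntidiag.mp hl).1]
  exact Finset.single_le_sum (f := l) (fun _ _ => Nat.zero_le _) hi

lemma coeff_prod_le_coeff_prod {ι R : Type*} [CommSemiring R] [PartialOrder R] [IsOrderedRing R]
    {s : Finset ι} {f g : ι → R⟦X⟧} {k : ℕ} (hf : ∀ i ∈ s, ∀ n ≤ k, 0 ≤ coeff n (f i))
    (hfg : ∀ i ∈ s, ∀ n ≤ k, coeff n (f i) ≤ coeff n (g i)) :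
    coeff k (∏ i ∈ s, f i) ≤ coeff k (∏ i ∈ s, g i) := by
  classical
  simp only [coeff_prod]
  exact Finset.sum_le_sum fun l hl => Finset.prod_le_prod
    (fun i hi => hf i hi _ (apply_le_of_mem_finsuppAntidiag hl hi))
    fun i hi => hfg i hi _ (apply_le_of_mem_finsuppAntidiag hl hi)

lemma sq_coeff_prod_le_mul_coeff_prod {ι R : Type*} [CommSemiring R] [LinearOrder R]
    [IsStrictOrderedRing R] [ExistsAddOfLE R] {s : Finset ι} {f g h : ι → R⟦X⟧} {k : ℕ}
    (hg : ∀ i ∈ s, ∀ n ≤ k, 0 ≤ coeff n (g i)) (hh : ∀ i ∈ s, ∀ n ≤ k, 0 ≤ coeff n (h i))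
    (hf : ∀ i ∈ s, ∀ n ≤ k, coeff n (f i) ^ 2 ≤ coeff n (g i) * coeff n (h i)) :
    coeff k (∏ i ∈ s, f i) ^ 2 ≤ coeff k (∏ i ∈ s, g i) * coeff k (∏ i ∈ s, h i) := by
  classical
  simp only [coeff_prod]
  refine Finset.sum_sq_le_sum_mul_sum_of_sq_le_mul _
    (fun l hl => Finset.prod_nonneg fun i hi => hg i hi _ (apply_le_of_mem_finsuppAntidiag hl hi))
    (fun l hl => Finset.prod_nonneg fun i hi => hh i hi _ (apply_le_of_mem_finsuppAntidiag hl hi))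
    fun l hl => ?_
  rw [← Finset.prod_pow, ← Finset.prod_mul_distrib]
  exact Finset.prod_le_prod (fun i _ => sq_nonneg _)
    fun i hi => hf i hi _ (apply_le_of_mem_finsuppAntidiag hl hi)

end PowerSeriesProducts

section ExponentialGeneratingFunctions

open PowerSeries
open scoped Nat

/-- The exponential generating function `∑ aₙ Xⁿ / n!` of a sequence, as a formal power series. -/
def egf {K : Type*} [Field K] (a : ℕ → K) : K⟦X⟧ := PowerSeries.mk fun n => a n / n !

lemma coeff_egf {K : Type*} [Field K] (a : ℕ → K) (n : ℕ) : coeff n (egf a) = a n / n ! :=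
  coeff_mk _ _

lemma derivative_egf {K : Type*} [Field K] [CharZero K] (a : ℕ → K) :
    d⁄dX K (egf a) = egf fun n => a (n + 1) := by
  ext n
  rw [coeff_derivative, coeff_egf, coeff_egf, Nat.factorial_succ]
  push_cast
  field_simp

lemma egf_add {K : Type*} [Field K] (a b : ℕ → K) : egf (a + b) = egf a + egf b := by
  ext n
  simp only [map_add, coeff_egf, Pi.add_apply, add_div]

lemma egf_pow_eq_rescale_exp {K : Type*} [Field K] [CharZero K] (a : K) :
    egf (a ^ ·) = rescale a (PowerSeries.exp K) := by
  ext n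
  simp [coeff_egf, coeff_exp, coeff_rescale, div_eq_mul_inv]

lemma egf_pow_pow {K : Type*} [Field K] [CharZero K] (a : K) (m : ℕ) :
    egf (a ^ ·) ^ m = egf ((m * a) ^ ·) := by
  rw [egf_pow_eq_rescale_exp, egf_pow_eq_rescale_exp, ← map_pow, exp_pow_eq_rescale_exp,
    rescale_rescale]

/-- The `m`-th power of `(exp (aX) - 1) / X` is coefficientwise at most that of `exp (aX) / X`. -/
lemma coeff_mk_pow_succ_div_factorial_succ_pow_le {K : Type*} [Field K] [LinearOrder K]
    [IsStrictOrderedRing K] {a : K} (ha : 0 ≤ a) (m k : ℕ) :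
    coeff k ((PowerSeries.mk fun n => a ^ (n + 1) / (n + 1)!) ^ m) ≤
      (m * a) ^ (k + m) / (k + m)! := by
  set G : K⟦X⟧ := PowerSeries.mk fun n => a ^ (n + 1) / (n + 1)!
  have coeff_X_mul (n : ℕ) :
      0 ≤ coeff n (X * G) ∧ coeff n (X * G) ≤ coeff n (egf (a ^ ·)) := by
    cases n with
    | zero => simp [coeff_egf]
    | succ n =>
      rw [coeff_succ_X_mul, coeff_mk, coeff_egf]
      exact ⟨by positivity, le_rfl⟩
  calc coeff k (G ^ m) = coeff (k + m) (∏ _i ∈ Finset.range m, X * G) := by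
        rw [Finset.prod_const, Finset.card_range, mul_pow, coeff_X_pow_mul]
    _ ≤ coeff (k + m) (∏ _i ∈ Finset.range m, egf (a ^ ·)) :=
        coeff_prod_le_coeff_prod (fun _ _ n _ => (coeff_X_mul n).1) fun _ _ n _ => (coeff_X_mul n).2
    _ = (m * a) ^ (k + m) / (k + m)! := by
        rw [Finset.prod_const, Finset.card_range, egf_pow_pow, coeff_egf]

end ExponentialGeneratingFunctions

section LatticeWalk

open PowerSeries
open scoped Nat

variable {ι : Type*} [Fintype ι] [DecidableEq ι]

/-- The number of nearest-neighbour walks of length `k` on `ℤ^ι` from `0` to `x`. -/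
def latticeWalkCount : ℕ → (ι → ℤ) → ℕ
  | 0, x => if x = 0 then 1 else 0
  | k + 1, x =>
      ∑ i, (latticeWalkCount k (x - Pi.single i 1) + latticeWalkCount k (x + Pi.single i 1))

/-- The exponential generating function of the numbers of walks on `ℤ` from `0` to `z`, counted by
their length. -/
def lineWalkEGF (z : ℤ) : ℝ⟦X⟧ := egf fun n => (lineWalkCount n z : ℝ)

lemma derivative_lineWalkEGF (z : ℤ) :
    d⁄dX ℝ (lineWalkEGF z) = lineWalkEGF (z - 1) + lineWalkEGF (z + 1) := by
  simp only [lineWalkEGF, derivative_egf, lineWalkCount, ← egf_add, Nat.cast_add]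
  rfl

lemma prod_lineWalkEGF_add_single (x : ι → ℤ) (i : ι) (c : ℤ) :
    ∏ j, lineWalkEGF ((x + Pi.single i c : ι → ℤ) j) =
      (∏ j ∈ Finset.univ.erase i, lineWalkEGF (x j)) * lineWalkEGF (x i + c) := by
  rw [← Finset.prod_erase_mul _ _ (Finset.mem_univ i)]
  congr 1
  · refine Finset.prod_congr rfl fun j hj => ?_
    simp [Finset.ne_of_mem_erase hj]
  · simp

lemma derivative_prod_lineWalkEGF (x : ι → ℤ) :
    d⁄dX ℝ (∏ i, lineWalkEGF (x i)) =
      ∑ i, (∏ j, lineWalkEGF ((x - Pi.single i 1 : ι → ℤ) j) +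
        ∏ j, lineWalkEGF ((x + Pi.single i 1 : ι → ℤ) j)) := by
  rw [derivation_finset_prod]
  refine Finset.sum_congr rfl fun i _ => ?_
  rw [derivative_lineWalkEGF, sub_eq_add_neg x, ← Pi.single_neg, prod_lineWalkEGF_add_single,
    prod_lineWalkEGF_add_single, smul_eq_mul, mul_add, sub_eq_add_neg]

lemma prod_lineWalkEGF (x : ι → ℤ) :
    ∏ i, lineWalkEGF (x i) = egf fun k => (latticeWalkCount k x : ℝ) := by
  ext k
  induction k generalizing x with
  | zero =>
    simp [map_prod, ← coeff_zero_eq_constantCoeff_apply, lineWalkEGF, coeff_egf, lineWalkCount,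
      latticeWalkCount, Finset.prod_ite_zero, funext_iff]
  | succ k ih =>
    have hk : (k : ℝ) + 1 ≠ 0 := by positivity
    refine mul_right_cancel₀ hk ?_
    rw [← coeff_derivative, derivative_prod_lineWalkEGF, ← coeff_derivative, derivative_egf]
    simp only [map_sum, map_add, ih, coeff_egf, latticeWalkCount, Nat.cast_sum, Nat.cast_add,
      add_div, Finset.sum_div]

lemma latticeWalkCount_div_factorial_sq_le (k : ℕ) (x : ι → ℤ) :
    ((latticeWalkCount k x : ℝ) / k !) ^ 2 ≤
      (2 * Fintype.card ι) ^ k / k ! *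
        (2 ^ Fintype.card ι * Real.exp (-((∑ i, (x i : ℝ) ^ 2) / (4 * (k + 1)))) *
          ((2 * Fintype.card ι) ^ (k + Fintype.card ι) / (k + Fintype.card ι)!)) := by
  set c : ι → ℝ := fun i => 2 * Real.exp (-((x i : ℝ) ^ 2 / (4 * (k + 1))))
  set G : ℝ⟦X⟧ := PowerSeries.mk fun n => 2 ^ (n + 1) / (n + 1)!
  have line_bound (i : ι) (n : ℕ) (hn : n ≤ k) : coeff n (lineWalkEGF (x i)) ^ 2 ≤
      coeff n (egf ((2 : ℝ) ^ ·)) * coeff n (C (c i) * G) := by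
    have hn' : (n : ℝ) ≤ k := by exact_mod_cast hn
    rw [lineWalkEGF, coeff_egf, coeff_egf, coeff_C_mul, coeff_mk, div_pow]
    calc (lineWalkCount n (x i) : ℝ) ^ 2 / (n ! : ℝ) ^ 2
        ≤ 4 * 4 ^ n / (n + 1) * Real.exp (-((x i : ℝ) ^ 2 / (4 * (k + 1)))) / (n ! : ℝ) ^ 2 := by
          gcongr
          exact (lineWalkCount_sq_le n (x i)).trans (by gcongr)
      _ = 2 ^ n / n ! * (c i * (2 ^ (n + 1) / (n + 1)!)) := by
          have four_pow : (4 : ℝ) ^ n = 2 ^ n * 2 ^ n := by rw [← mul_pow]; norm_num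
          rw [four_pow, Nat.factorial_succ]
          simp only [c]
          push_cast
          field_simp
          ring
  have prod_c : ∏ i, c i =
      2 ^ Fintype.card ι * Real.exp (-((∑ i, (x i : ℝ) ^ 2) / (4 * (k + 1)))) := by
    simp only [c, Finset.prod_mul_distrib, ← Real.exp_sum, Finset.prod_const, Finset.card_univ,
      Finset.sum_neg_distrib, Finset.sum_div]
  calc ((latticeWalkCount k x : ℝ) / k !) ^ 2
      = coeff k (∏ i, lineWalkEGF (x i)) ^ 2 := by rw [prod_lineWalkEGF, coeff_egf]
    _ ≤ coeff k (∏ _i : ι, egf ((2 : ℝ) ^ ·)) * coeff k (∏ i, C (c i) * G) := by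
        refine sq_coeff_prod_le_mul_coeff_prod (fun _ _ n _ => ?_) (fun i _ n _ => ?_)
          fun i _ => line_bound i
        · rw [coeff_egf]
          positivity
        · rw [coeff_C_mul, coeff_mk]
          positivity
    _ = (2 * Fintype.card ι) ^ k / k ! * ((∏ i, c i) * coeff k (G ^ Fintype.card ι)) := by
        rw [Finset.prod_const, Finset.card_univ, egf_pow_pow, coeff_egf, Finset.prod_mul_distrib,
          ← map_prod, coeff_C_mul, Finset.prod_const, Finset.card_univ, mul_comm (2 : ℝ)]
    _ ≤ _ := by
        rw [prod_c, mul_comm (2 : ℝ) (Fintype.card ι)]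
        gcongr
        exact coeff_mk_pow_succ_div_factorial_succ_pow_le zero_le_two _ _

lemma latticeWalkCount_sq_le (k : ℕ) (x : ι → ℤ) :
    (latticeWalkCount k x : ℝ) ^ 2 ≤
      ((2 * Fintype.card ι) ^ k) ^ 2 * ((4 * Fintype.card ι / (k + 1)) ^ Fintype.card ι *
        Real.exp (-((∑ i, (x i : ℝ) ^ 2) / (4 * (k + 1))))) := by
  have count_bound := latticeWalkCount_div_factorial_sq_le k x
  set n := Fintype.card ι
  set E := Real.exp (-((∑ i, (x i : ℝ) ^ 2) / (4 * (k + 1))))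
  have factorial_ratio : (k ! : ℝ) / (k + n)! ≤ 1 / (k + 1) ^ n := by
    rw [div_le_div_iff₀ (by positivity) (by positivity), one_mul]
    exact_mod_cast Nat.factorial_mul_pow_le_factorial
  rw [div_pow, div_le_iff₀ (by positivity)] at count_bound
  calc (latticeWalkCount k x : ℝ) ^ 2
      ≤ (2 * n) ^ k / k ! * (2 ^ n * E * ((2 * n) ^ (k + n) / (k + n)!)) * (k ! : ℝ) ^ 2 :=
        count_bound
    _ = ((2 * n) ^ k) ^ 2 * ((2 * (2 * n)) ^ n * (k ! / (k + n)!) * E) := by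
        rw [pow_add, mul_pow 2 (2 * (n : ℝ))]
        field_simp
    _ ≤ ((2 * n) ^ k) ^ 2 * ((2 * (2 * n)) ^ n * (1 / (k + 1) ^ n) * E) := by gcongr
    _ = ((2 * n) ^ k) ^ 2 * ((4 * n / (k + 1)) ^ n * E) := by
        rw [div_pow]
        ring

end LatticeWalk

section TransitionProbabilities

lemma srwP_eq_latticeWalkCount_div (d k : ℕ) (x : Fin d → ℤ) :
    srwP d k x = latticeWalkCount k x / (2 * d) ^ k := by
  induction k generalizing x with
  | zero => simp [srwP, latticeWalkCount]
  | succ k ih =>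
    simp only [srwP, latticeWalkCount, ih, Nat.cast_sum, Nat.cast_add, div_eq_mul_inv, ← add_mul,
      ← Finset.sum_mul, ENNReal.inv_pow]
    rw [pow_succ', mul_left_comm]

lemma nrmZ_nonneg (d : ℕ) (x : Fin d → ℤ) : 0 ≤ nrmZ d x := Real.sqrt_nonneg _

lemma nrmZ_sq (d : ℕ) (x : Fin d → ℤ) : nrmZ d x ^ 2 = ∑ i, (x i : ℝ) ^ 2 :=
  Real.sq_sqrt (Finset.sum_nonneg fun _ _ => sq_nonneg _)

lemma nrmZ_eq_zero_iff {d : ℕ} {x : Fin d → ℤ} : nrmZ d x = 0 ↔ x = 0 := by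
  rw [← sq_eq_zero_iff, nrmZ_sq, Finset.sum_eq_zero_iff_of_nonneg fun _ _ => sq_nonneg _]
  simp [funext_iff]

lemma srwP_le (d k : ℕ) (x : Fin d → ℤ) :
    srwP d k x ≤ ENNReal.ofReal
      (√(4 * d / (k + 1)) ^ d * Real.exp (-(nrmZ d x ^ 2 / (8 * (k + 1))))) := by
  have count_le : (latticeWalkCount k x : ℝ) ≤ (2 * d) ^ k *
      (√(4 * d / (k + 1)) ^ d * Real.exp (-(nrmZ d x ^ 2 / (8 * (k + 1))))) := by
    refine le_of_sq_le_sq ((latticeWalkCount_sq_le k x).trans_eq ?_) (by positivity)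
    rw [mul_pow ((2 * (d : ℝ)) ^ k), mul_pow (_ ^ d), pow_right_comm _ d,
      Real.sq_sqrt (by positivity), ← Real.exp_nat_mul, nrmZ_sq, Fintype.card_fin]
    congr 3
    push_cast
    field_simp
    ring
  rw [srwP_eq_latticeWalkCount_div]
  refine ENNReal.div_le_of_le_mul' ?_
  have base_eq : (2 * d : ENNReal) ^ k = ENNReal.ofReal ((2 * d) ^ k) := by
    rw [ENNReal.ofReal_pow (by positivity), ENNReal.ofReal_mul zero_le_two]
    simp
  rw [base_eq, ← ENNReal.ofReal_mul (by positivity), ← ENNReal.ofReal_natCast]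
  exact ENNReal.ofReal_le_ofReal count_le

lemma srwP_mul_srwP_le (d k : ℕ) (x y : Fin d → ℤ) :
    srwP d k x * srwP d k y ≤ ENNReal.ofReal
      ((4 * d / (k + 1)) ^ d * Real.exp (-((nrmZ d x ^ 2 + nrmZ d y ^ 2) / (8 * (k + 1))))) := by
  refine (mul_le_mul' (srwP_le d k x) (srwP_le d k y)).trans_eq ?_
  rw [← ENNReal.ofReal_mul (by positivity), mul_mul_mul_comm, ← mul_pow,
    Real.mul_self_sqrt (by positivity), ← Real.exp_add, ← neg_add, ← add_div]

end TransitionProbabilities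

section TimeSums

lemma inv_add_one_pow_le_sub {s : ℝ} (hs : 0 < s) (m : ℕ) :
    ((s + 1) ^ (m + 2))⁻¹ ≤ (s ^ (m + 1))⁻¹ - ((s + 1) ^ (m + 1))⁻¹ := by
  have inv_le : (s + 1)⁻¹ ≤ s⁻¹ := by gcongr; linarith
  have inv_sub : s⁻¹ - (s + 1)⁻¹ = s⁻¹ * (s + 1)⁻¹ := by field_simp; ring
  simp only [← inv_pow]
  calc (s + 1)⁻¹ ^ (m + 2) = (s + 1)⁻¹ ^ m * ((s + 1)⁻¹ * (s + 1)⁻¹) := by ring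
    _ ≤ (s + 1)⁻¹ ^ m * (s⁻¹ * (s + 1)⁻¹) := by gcongr
    _ = (s + 1)⁻¹ ^ m * s⁻¹ - (s + 1)⁻¹ ^ (m + 1) := by rw [← inv_sub]; ring
    _ ≤ s⁻¹ ^ m * s⁻¹ - (s + 1)⁻¹ ^ (m + 1) := by gcongr
    _ = s⁻¹ ^ (m + 1) - (s + 1)⁻¹ ^ (m + 1) := by ring

lemma tsum_ofReal_le_of_le_sub {f g : ℕ → ℝ} (hf : ∀ k, 0 ≤ f k) (hg : ∀ k, 0 ≤ g k)
    (hfg : ∀ k, f k ≤ g k - g (k + 1)) : ∑' k, ENNReal.ofReal (f k) ≤ ENNReal.ofReal (g 0) := by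
  refine ENNReal.tsum_le_of_sum_range_le fun n => ?_
  rw [← ENNReal.ofReal_sum_of_nonneg fun k _ => hf k]
  apply ENNReal.ofReal_le_ofReal
  calc ∑ k ∈ Finset.range n, f k ≤ ∑ k ∈ Finset.range n, (g k - g (k + 1)) :=
        Finset.sum_le_sum fun k _ => hfg k
    _ = g 0 - g n := Finset.sum_range_sub' g n
    _ ≤ g 0 := sub_le_self _ (hg n)

lemma tsum_inv_add_pow_le {s : ℝ} (hs : 0 < s) (m : ℕ) :
    ∑' k : ℕ, ENNReal.ofReal ((s + (k + 1)) ^ (m + 2))⁻¹ ≤ ENNReal.ofReal (s ^ (m + 1))⁻¹ := by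
  have h := tsum_ofReal_le_of_le_sub (f := fun k : ℕ => ((s + (k + 1)) ^ (m + 2))⁻¹)
    (g := fun k : ℕ => ((s + k) ^ (m + 1))⁻¹) (fun k => by positivity) (fun k => by positivity)
    fun k => by simpa [add_assoc] using inv_add_one_pow_le_sub (s := s + k) (by positivity) m
  simpa using h

/-- This is `zᵖ / p! ≤ exp z` at `z = c (R + t) / t`. -/
lemma inv_pow_mul_exp_neg_le {c R t : ℝ} (hc : 0 < c) (hR : 0 ≤ R) (ht : 0 < t) (p : ℕ) :
    (t ^ p)⁻¹ * Real.exp (-(c * R / t)) ≤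
      p.factorial * Real.exp c / c ^ p * ((R + t) ^ p)⁻¹ := by
  have exponent_eq : c + c * R / t = c * (R + t) / t := by
    field_simp
    ring
  have h : (c * (R + t) / t) ^ p / p.factorial ≤ Real.exp c * Real.exp (c * R / t) := by
    rw [← Real.exp_add, exponent_eq]
    exact Real.pow_div_factorial_le_exp _ (by positivity) p
  rw [div_pow, mul_pow, div_le_iff₀ (by positivity), div_le_iff₀ (by positivity)] at h
  rw [Real.exp_neg, ← mul_inv, ← div_eq_mul_inv, div_div, inv_eq_one_div,
    div_le_div_iff₀ (by positivity) (by positivity), one_mul]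
  linarith

lemma tsum_inv_pow_mul_exp_neg_le {c R : ℝ} (hc : 0 < c) (hR : 0 < R) (m : ℕ) :
    ∑' k : ℕ, ENNReal.ofReal
        ((((k : ℝ) + 1) ^ (m + 2))⁻¹ * Real.exp (-(c * R / (k + 1)))) ≤
      ENNReal.ofReal ((m + 2).factorial * Real.exp c / c ^ (m + 2) / R ^ (m + 1)) := by
  set M : ℝ := (m + 2).factorial * Real.exp c / c ^ (m + 2)
  calc _ ≤ ∑' k : ℕ, ENNReal.ofReal (M * ((R + (k + 1)) ^ (m + 2))⁻¹) := by
        gcongr ∑' k, ENNReal.ofReal ?_ with k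
        exact inv_pow_mul_exp_neg_le hc hR.le (by positivity) (m + 2)
    _ = ENNReal.ofReal M * ∑' k : ℕ, ENNReal.ofReal ((R + (k + 1)) ^ (m + 2))⁻¹ := by
        rw [← ENNReal.tsum_mul_left]
        congr with k
        exact ENNReal.ofReal_mul (by positivity)
    _ ≤ ENNReal.ofReal M * ENNReal.ofReal (R ^ (m + 1))⁻¹ := by
        gcongr
        exact tsum_inv_add_pow_le hR m
    _ = ENNReal.ofReal (M / R ^ (m + 1)) := by
        rw [← ENNReal.ofReal_mul (by positivity), div_eq_mul_inv]

end TimeSums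

section WeightedSums

lemma one_sub_pow_le_exp {α : ℝ} (hα : α ∈ Set.Icc (0 : ℝ) 1) (k : ℕ) :
    (1 - α) ^ k ≤ Real.exp 1 * Real.exp (-(α * (k + 1))) := by
  calc (1 - α) ^ k ≤ Real.exp (-α) ^ k :=
        pow_le_pow_left₀ (by linarith [hα.2]) (Real.one_sub_le_exp_neg α) k
    _ = Real.exp (α + -(α * (k + 1))) := by
        rw [← Real.exp_nat_mul]
        ring_nf
    _ ≤ Real.exp 1 * Real.exp (-(α * (k + 1))) := by
        rw [Real.exp_add]
        gcongr
        exact hα.2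

lemma add_mul_sqrt_le {α t : ℝ} (hα : 0 ≤ α) (ht : 0 < t) (a b : ℝ) :
    1 / 4 * (a + b) * √α ≤ α * t + (a ^ 2 + b ^ 2) / (16 * t) := by
  have am_gm : 1 / 4 * (a + b) * √α ≤ α * t + (a + b) ^ 2 / (64 * t) := by
    have h : 0 ≤ (√α * t - (a + b) / 8) ^ 2 / t := by positivity
    have expand : (√α * t - (a + b) / 8) ^ 2 / t =
        √α ^ 2 * t + (a + b) ^ 2 / (64 * t) - 1 / 4 * (a + b) * √α := by
      field_simp
      ring
    rw [expand, Real.sq_sqrt hα] at h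
    linarith
  have add_sq_le : (a + b) ^ 2 / (64 * t) ≤ (a ^ 2 + b ^ 2) / (16 * t) := by
    rw [div_le_div_iff₀ (by positivity) (by positivity)]
    nlinarith [mul_nonneg ht.le (sq_nonneg (a - b)), mul_nonneg ht.le (sq_nonneg (a + b))]
  linarith

lemma one_sub_pow_mul_exp_le {α : ℝ} (hα : α ∈ Set.Icc (0 : ℝ) 1) (k : ℕ) (a b : ℝ) :
    (1 - α) ^ k * Real.exp (-((a ^ 2 + b ^ 2) / (8 * (k + 1)))) ≤
      Real.exp 1 * Real.exp (-(1 / 4 * (a + b) * √α)) *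
        Real.exp (-(1 / 16 * (a ^ 2 + b ^ 2) / (k + 1))) := by
  calc (1 - α) ^ k * Real.exp (-((a ^ 2 + b ^ 2) / (8 * (k + 1))))
      ≤ Real.exp 1 * Real.exp (-(α * (k + 1))) *
          Real.exp (-((a ^ 2 + b ^ 2) / (8 * (k + 1)))) := by
        gcongr
        exact one_sub_pow_le_exp hα k
    _ = Real.exp 1 * Real.exp (-(α * (k + 1) + (a ^ 2 + b ^ 2) / (16 * (k + 1)))) *
          Real.exp (-(1 / 16 * (a ^ 2 + b ^ 2) / (k + 1))) := by
        simp only [← Real.exp_add]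
        congr 1
        field_simp
        ring
    _ ≤ _ := by
        gcongr
        exact add_mul_sqrt_le hα.1 (by positivity) a b

lemma weighted_term_le {α : ℝ} (hα : α ∈ Set.Icc (0 : ℝ) 1) (d k : ℕ) (x y : Fin (d + 1) → ℤ) :
    (k : ENNReal) * ENNReal.ofReal ((1 - α) ^ k) * (srwP (d + 1) k x * srwP (d + 1) k y) ≤
      ENNReal.ofReal ((4 * (d + 1)) ^ (d + 1) * Real.exp 1 *
          Real.exp (-(1 / 4 * (nrmZ (d + 1) x + nrmZ (d + 1) y) * √α))) *
        ENNReal.ofReal ((((k : ℝ) + 1) ^ d)⁻¹ *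
          Real.exp (-(1 / 16 * (nrmZ (d + 1) x ^ 2 + nrmZ (d + 1) y ^ 2) / (k + 1)))) := by
  have weight_nonneg : 0 ≤ (1 - α) ^ k := pow_nonneg (by linarith [hα.2]) k
  refine (mul_le_mul_right (srwP_mul_srwP_le (d + 1) k x y) _).trans ?_
  rw [← ENNReal.ofReal_natCast, ← ENNReal.ofReal_mul (by positivity),
    ← ENNReal.ofReal_mul (by positivity), ← ENNReal.ofReal_mul (by positivity)]
  apply ENNReal.ofReal_le_ofReal
  have exp_bound := one_sub_pow_mul_exp_le hα k (nrmZ (d + 1) x) (nrmZ (d + 1) y)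
  set a := nrmZ (d + 1) x
  set b := nrmZ (d + 1) y
  push_cast
  calc (k : ℝ) * (1 - α) ^ k *
        ((4 * (d + 1) / (k + 1)) ^ (d + 1) * Real.exp (-((a ^ 2 + b ^ 2) / (8 * (k + 1)))))
      ≤ (k + 1) * (1 - α) ^ k *
        ((4 * (d + 1) / (k + 1)) ^ (d + 1) * Real.exp (-((a ^ 2 + b ^ 2) / (8 * (k + 1))))) := by
        gcongr
        linarith
    _ = (4 * (d + 1)) ^ (d + 1) * (((k : ℝ) + 1) ^ d)⁻¹ *
        ((1 - α) ^ k * Real.exp (-((a ^ 2 + b ^ 2) / (8 * (k + 1))))) := by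
        rw [div_pow, pow_succ ((k : ℝ) + 1)]
        field_simp
    _ ≤ (4 * (d + 1)) ^ (d + 1) * (((k : ℝ) + 1) ^ d)⁻¹ *
        (Real.exp 1 * Real.exp (-(1 / 4 * (a + b) * √α)) *
          Real.exp (-(1 / 16 * (a ^ 2 + b ^ 2) / (k + 1)))) := by gcongr
    _ = _ := by ring

lemma nrmZ_sq_add_nrmZ_sq_pos {d : ℕ} {x y : Fin d → ℤ} (hxy : ¬(x = 0 ∧ y = 0)) :
    0 < nrmZ d x ^ 2 + nrmZ d y ^ 2 := by
  contrapose! hxy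
  constructor <;> rw [← nrmZ_eq_zero_iff, ← sq_eq_zero_iff] <;>
    nlinarith [sq_nonneg (nrmZ d x), sq_nonneg (nrmZ d y)]

lemma div_add_pow_le {A r s : ℝ} (hA : 0 ≤ A) (hr : 0 ≤ r) (hs : 0 ≤ s) (hrs : 0 < r + s)
    {n : ℕ} (hn : n ≠ 0) : A / (r + s) ^ n ≤ A / (r ^ n + s ^ n) := by
  have denominator_pos : 0 < r ^ n + s ^ n := by
    rcases hr.eq_or_lt with rfl | hr'
    · rw [zero_add] at hrs
      positivity
    · positivity
  gcongr
  exact pow_add_pow_le hr hs hn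

lemma tsum_mul_one_sub_pow_mul_le {α : ℝ} (hα : α ∈ Set.Icc (0 : ℝ) 1) (f g : ℕ → ENNReal) :
    ∑' k, f k * ENNReal.ofReal ((1 - α) ^ k) * g k ≤ ∑' k, f k * g k := by
  gcongr with k
  refine mul_le_of_le_one_right' (ENNReal.ofReal_le_one.mpr ?_)
  exact pow_le_one₀ (by linarith [hα.2]) (by linarith [hα.1])

lemma not_both_zero_of_pos_le_nrmZ_add {d : ℕ} {x y : Fin d → ℤ} {r : ℝ} (hr : 0 < r)
    (h : r ≤ nrmZ d x + nrmZ d y) : ¬(x = 0 ∧ y = 0) := by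
  rintro ⟨rfl, rfl⟩
  rw [nrmZ_eq_zero_iff.mpr rfl, add_zero] at h
  exact hr.not_ge h

theorem weighted_two_point_bounds_general (d : ℕ) (hd : 2 < d) :
    ∃ C : ℝ, 0 < C ∧ ∀ x y : Fin d → ℤ, ¬(x = 0 ∧ y = 0) → ∀ α ∈ Set.Icc (0 : ℝ) 1,
      ∑' k : ℕ, (k : ENNReal) * ENNReal.ofReal ((1 - α) ^ k) * (srwP d k x * srwP d k y) ≤
        ENNReal.ofReal
          (C * Real.exp (-(1 / 4 * (nrmZ d x + nrmZ d y) * √α)) /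
            (nrmZ d x ^ (2 * d - 4) + nrmZ d y ^ (2 * d - 4))) := by
  obtain ⟨m, rfl⟩ : ∃ m, d = m + 2 + 1 := ⟨d - 3, by omega⟩
  set M : ℝ := (m + 2).factorial * Real.exp (1 / 16) / (1 / 16) ^ (m + 2)
  set K : ℝ := (4 * ((m + 2 : ℕ) + 1)) ^ (m + 2 + 1) * Real.exp 1
  refine ⟨K * M, by positivity, fun x y hxy α hα => ?_⟩
  have hR := nrmZ_sq_add_nrmZ_sq_pos hxy
  refine (ENNReal.tsum_le_tsum fun k => weighted_term_le hα (m + 2) k x y).trans ?_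
  rw [ENNReal.tsum_mul_left]
  refine (mul_le_mul_right (tsum_inv_pow_mul_exp_neg_le (by norm_num) hR m) _).trans ?_
  rw [← ENNReal.ofReal_mul (by positivity), mul_div_assoc']
  apply ENNReal.ofReal_le_ofReal
  rw [show 2 * (m + 2 + 1) - 4 = 2 * (m + 1) by omega, pow_mul, pow_mul, mul_right_comm K]
  exact div_add_pow_le (by positivity) (sq_nonneg _) (sq_nonneg _) hR m.succ_ne_zero

end WeightedSums

/-- For `d > 2`:
(i) there is `C > 0` (depending only on `d`) such that for all `(x,y) ≠ (0,0)` and all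
`α ∈ (0,1)`:
`Σ_k k(1−α)^k P(X_k=x)P(X_k=y) ≤ Σ_k k P(X_k=x)P(X_k=y) ≤ C/(‖x‖^{2d−4}+‖y‖^{2d−4})`;
(ii) for every `c₀ > 0` there are `c₂, C' > 0` and `α₀ ∈ (0,1)` (depending only on `d, c₀`)
such that for `α ∈ (0,α₀)` and `‖x‖+‖y‖ ≥ c₀/√α`:
`Σ_k k(1−α)^k P(X_k=x)P(X_k=y) ≤ C' e^{−c₂(‖x‖+‖y‖)√α}/(‖x‖^{2d−4}+‖y‖^{2d−4})`. -/
theorem weighted_two_point_bounds (d : ℕ) (hd : 2 < d) :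
    (∃ C : ℝ, 0 < C ∧ ∀ x y : Fin d → ℤ, ¬(x = 0 ∧ y = 0) → ∀ α ∈ Set.Ioo (0 : ℝ) 1,
      ∑' k : ℕ, (k : ENNReal) * ENNReal.ofReal ((1 - α) ^ k) * (srwP d k x * srwP d k y) ≤
          ∑' k : ℕ, (k : ENNReal) * (srwP d k x * srwP d k y) ∧
        ∑' k : ℕ, (k : ENNReal) * (srwP d k x * srwP d k y) ≤
          ENNReal.ofReal (C / (nrmZ d x ^ (2 * d - 4) + nrmZ d y ^ (2 * d - 4)))) ∧
    ∀ c₀ : ℝ, 0 < c₀ →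
      ∃ c₂ C' α₀ : ℝ, 0 < c₂ ∧ 0 < C' ∧ α₀ ∈ Set.Ioo (0 : ℝ) 1 ∧
        ∀ α ∈ Set.Ioo (0 : ℝ) α₀, ∀ x y : Fin d → ℤ,
          c₀ / Real.sqrt α ≤ nrmZ d x + nrmZ d y →
            ∑' k : ℕ, (k : ENNReal) * ENNReal.ofReal ((1 - α) ^ k) *
                (srwP d k x * srwP d k y) ≤
              ENNReal.ofReal
                (C' * Real.exp (-(c₂ * (nrmZ d x + nrmZ d y) * Real.sqrt α)) /
                  (nrmZ d x ^ (2 * d - 4) + nrmZ d y ^ (2 * d - 4))) := by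
  obtain ⟨C, hC, bound⟩ := weighted_two_point_bounds_general d hd
  refine ⟨⟨C, hC, fun x y hxy α hα => ⟨?_, ?_⟩⟩,
    fun c₀ hc₀ => ⟨1 / 4, C, 1 / 2, by norm_num, hC, by norm_num, fun α hα x y hxy => ?_⟩⟩
  · exact tsum_mul_one_sub_pow_mul_le (Set.Ioo_subset_Icc_self hα) _ _
  · simpa using bound x y hxy 0 ⟨le_rfl, zero_le_one⟩
  · have hxy' := not_both_zero_of_pos_le_nrmZ_add (div_pos hc₀ (Real.sqrt_pos.mpr hα.1)) hxy
    exact bound x y hxy' α ⟨hα.1.le, by linarith [hα.2]⟩
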